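/- Let B ⊂ ℝⁿ be an open ball of radius R centered at x₀, and let f : ℝ → ℝ be f = f₁ + f₂ with f₁ locally Lipschitz and f₂ non-decreasing. Then any solution u ∈ C²(cl B) with u > 0 in B of −Δu = f(u) in B, u = 0 on ∂B, is radially symmetric about x₀, and its radial derivative satisfies ∂u/∂r < 0 for 0 < r < R. -/

import Mathlib

/-!
The proof is the method of moving planes. After translation the ball is centred at the origin. For a
unit vector `e` and `0 ≤ l ≤ R`, let `w = u ∘ σ - u`, where `σ` is the reflection in the hyperplane
`⟪e, x⟫ = l` (`planeRefl`); it is shown that `w ≥ 0` on the cap `⟪e, x⟫ > l` for every such `l`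
(`CapLe`, `PosSol.capLe_all`). For `l = 0` and all `e` this compares any two points of equal norm in
both directions, which is radial symmetry (`PosSol.radial`). For `l = |x|` and `e = x / |x|`,
Hopf's lemma for `w` gives the sign of the radial derivative (`PosSol.radial_deriv_neg`).

The equation is used only in the form `Δu(x) - Δu(y) ≤ K (u(x) - u(y))` whenever `u(y) ≤ u(x)`: the
Lipschitz part of `f` gives the constant `K`, and the monotone part contributes with a good sign.
Hence `Δw ≤ K w` wherever `w ≥ 0`, so that Hopf's boundary point lemma (`hopf_lemma`) and the strong
maximum principle (`strong_max_principle`) apply. They give `w > 0` in the cap (`PosSol.cap_lt`) and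
`∂u/∂e < 0` on the hyperplane inside the ball (`PosSol.deriv_neg_of_cap`).

The set of admissible `l` is closed and contains `R`, since the cap is then empty. To move the plane
past an admissible `l₀ > 0` (`PosSol.cap_step`), suppose the inequality fails at points `x k` for
planes `l k → l₀`. A limit point `p` of `x k` must lie on the limiting hyperplane, and by the mean
value theorem `∂u/∂e > 0` at points tending to `p`. This contradicts Hopf's lemma if `p` is inside
the ball. If `p` is on the boundary, it is excluded by `PosSol.no_increase_near_bdry`, according to
the sign of `Δu(p)`. When `Δu(p) ≤ 0`, Hopf's lemma applied to `u` itself gives `∂u/∂e < 0` at `p`.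
When `Δu(p) > 0` and the gradient vanishes at `p`, the Hessian at `p` is a multiple of `ν ⊗ ν` with
`ν` the normal, so `∂²u/∂e² > 0` near `p`; as `∂u/∂e ≤ 0` on the boundary near `p`, `∂u/∂e < 0` at
the interior points near `p`. This dichotomy also starts the procedure at `l₀ = R`.
-/

open Metric Set MeasureTheory Filter Bornology
open scoped RealInnerProductSpace Topology

noncomputable section

/-- The Laplacian of `u : ℝⁿ → ℝ`, as the sum of the pure second partial derivatives. -/
def lap {n : ℕ} (u : EuclideanSpace ℝ (Fin n) → ℝ) (x : EuclideanSpace ℝ (Fin n)) : ℝ :=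
  ∑ i : Fin n, iteratedFDeriv ℝ 2 u x ![EuclideanSpace.single i 1, EuclideanSpace.single i 1]

/-! ### The Laplacian -/

theorem lap_eq_laplacian {n : ℕ} (w : EuclideanSpace ℝ (Fin n) → ℝ)
    (x : EuclideanSpace ℝ (Fin n)) : lap w x = Laplacian.laplacian w x := by
  rw [InnerProductSpace.laplacian_eq_iteratedFDeriv_orthonormalBasis w
    (EuclideanSpace.basisFun (Fin n) ℝ)]
  simp [lap]

theorem lap_sub {n : ℕ} {v w : EuclideanSpace ℝ (Fin n) → ℝ} {x : EuclideanSpace ℝ (Fin n)}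
    (hv : ContDiffAt ℝ 2 v x) (hw : ContDiffAt ℝ 2 w x) :
    lap (fun y => v y - w y) x = lap v x - lap w x := by
  simp only [lap_eq_laplacian]
  exact hv.laplacian_sub hw

theorem lap_const_mul {n : ℕ} {w : EuclideanSpace ℝ (Fin n) → ℝ} {x : EuclideanSpace ℝ (Fin n)}
    (c : ℝ) (hw : ContDiffAt ℝ 2 w x) :
    lap (fun y => c * w y) x = c * lap w x := by
  simp only [lap_eq_laplacian]
  exact InnerProductSpace.laplacian_smul c hw

theorem lap_comp_add {n : ℕ} (w : EuclideanSpace ℝ (Fin n) → ℝ)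
    (a x : EuclideanSpace ℝ (Fin n)) : lap (fun y => w (y + a)) x = lap w (x + a) := by
  simp only [lap, iteratedFDeriv_comp_add_right]

theorem lap_comp_isometry {n : ℕ} (w : EuclideanSpace ℝ (Fin n) → ℝ)
    (L : EuclideanSpace ℝ (Fin n) ≃ₗᵢ[ℝ] EuclideanSpace ℝ (Fin n))
    (x : EuclideanSpace ℝ (Fin n)) : lap (fun y => w (L y)) x = lap w (L x) := by
  rw [lap_eq_laplacian w, InnerProductSpace.laplacian_eq_iteratedFDeriv_orthonormalBasis w
    ((EuclideanSpace.basisFun (Fin n) ℝ).map L)]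
  have h := L.toContinuousLinearEquiv.iteratedFDerivWithin_comp_right w
    (uniqueDiffOn_univ) (x := x) (mem_univ _) 2
  simp only [preimage_univ, iteratedFDerivWithin_univ] at h
  have h' : iteratedFDeriv ℝ 2 (fun y => w (L y)) x = _ := h
  simp only [lap, h']
  refine Finset.sum_congr rfl fun i _ => ?_
  simp only [ContinuousMultilinearMap.compContinuousLinearMap_apply]
  congr 1
  funext j
  fin_cases j <;> simp

theorem lap_eq_sum_fderiv {n : ℕ} (w : EuclideanSpace ℝ (Fin n) → ℝ)
    (x : EuclideanSpace ℝ (Fin n)) :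
    lap w x = ∑ i : Fin n, fderiv ℝ (fderiv ℝ w) x (EuclideanSpace.single i 1)
      (EuclideanSpace.single i 1) := by
  simp [lap, iteratedFDeriv_two_apply]

theorem sum_inner_single_sq {n : ℕ} (x : EuclideanSpace ℝ (Fin n)) :
    ∑ i : Fin n, ⟪x, EuclideanSpace.single i (1 : ℝ)⟫ ^ 2 = ‖x‖ ^ 2 := by
  rw [← (EuclideanSpace.basisFun (Fin n) ℝ).sum_sq_inner_right x]
  simp [real_inner_comm]

/-- Necessary second order condition at a local minimum. -/
theorem lap_nonneg_of_isLocalMin {n : ℕ} {w : EuclideanSpace ℝ (Fin n) → ℝ}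
    {x : EuclideanSpace ℝ (Fin n)} (hw : ContDiffAt ℝ 2 w x) (hmin : IsLocalMin w x) :
    0 ≤ lap w x := by
  rw [lap_eq_sum_fderiv]
  refine Finset.sum_nonneg fun i _ => ?_
  set v : EuclideanSpace ℝ (Fin n) := EuclideanSpace.single i 1
  by_contra hneg
  push Not at hneg
  have hline : ∀ t : ℝ, HasDerivAt (fun t : ℝ => x + t • v) v t := fun t => by
    simpa using ((hasDerivAt_id t).smul_const v).const_add x
  have hcont : Tendsto (fun t : ℝ => x + t • v) (𝓝 0) (𝓝 x) := by
    have := (hline 0).continuousAt.tendsto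
    simpa using this
  have hd1 : ∀ᶠ y in 𝓝 x, DifferentiableAt ℝ w y :=
    (hw.eventually (by simp)).mono fun y hy => hy.differentiableAt (by simp)
  have hd2 : DifferentiableAt ℝ (fderiv ℝ w) x :=
    (hw.fderiv_right (m := 1) (by norm_num)).differentiableAt (by simp)
  have hg1 : ∀ᶠ t in 𝓝 (0 : ℝ), deriv (fun t : ℝ => w (x + t • v)) t
      = fderiv ℝ w (x + t • v) v := by
    filter_upwards [hcont.eventually hd1] with t ht
    exact (ht.hasFDerivAt.comp_hasDerivAt t (hline t)).deriv
  have hg2 : HasDerivAt (fun t : ℝ => fderiv ℝ w (x + t • v) v) (fderiv ℝ (fderiv ℝ w) x v v) 0 := by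
    have h1 : HasDerivAt (fun t : ℝ => fderiv ℝ w (x + t • v)) (fderiv ℝ (fderiv ℝ w) x v) 0 :=
      HasFDerivAt.comp_hasDerivAt (l := fderiv ℝ w) (0 : ℝ) (by simpa using hd2.hasFDerivAt)
        (hline 0)
    simpa using h1.clm_apply (hasDerivAt_const (0 : ℝ) v)
  have hdd : deriv (deriv (fun t : ℝ => w (x + t • v))) 0 = fderiv ℝ (fderiv ℝ w) x v v := by
    rw [Filter.EventuallyEq.deriv_eq hg1]
    exact hg2.deriv
  have hmin' : IsLocalMin (fun t : ℝ => w (x + t • v)) 0 := by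
    have := hcont.eventually hmin
    simpa [IsLocalMin, IsMinFilter] using this
  have hcw : ContinuousAt (fun t : ℝ => w (x + t • v)) 0 := by
    refine ContinuousAt.comp (g := w) ?_ (hline 0).continuousAt
    simpa using hw.continuousAt
  have hmax : IsLocalMax (fun t : ℝ => w (x + t • v)) 0 :=
    isLocalMax_of_deriv_deriv_neg (by rw [hdd]; exact hneg) hmin'.deriv_eq_zero hcw
  -- a local minimum which is also a local maximum is locally constant
  have hconst : (fun t : ℝ => w (x + t • v)) =ᶠ[𝓝 0] fun _ => w (x + (0 : ℝ) • v) := by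
    filter_upwards [hmin', hmax] with t h1 h2
    exact le_antisymm h2 h1
  have : deriv (deriv (fun t : ℝ => w (x + t • v))) 0 = 0 := by
    rw [hconst.deriv.deriv_eq]
    simp
  rw [hdd] at this
  exact hneg.ne this

/-! ### Hopf's boundary point lemma and the strong maximum principle -/

/-- Hopf's radial barrier `exp (-α |x - y|²)`. -/
def barrier {n : ℕ} (α : ℝ) (y x : EuclideanSpace ℝ (Fin n)) : ℝ :=
  Real.exp (-α * ‖x - y‖ ^ 2)

theorem barrier_contDiff {n : ℕ} (α : ℝ) (y : EuclideanSpace ℝ (Fin n)) :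
    ContDiff ℝ 2 (barrier α y) := by
  unfold barrier
  exact (contDiff_const.mul ((contDiff_id.sub contDiff_const).norm_sq ℝ)).exp

theorem lap_barrier {n : ℕ} (α : ℝ) (y x : EuclideanSpace ℝ (Fin n)) :
    lap (barrier α y) x
      = (4 * α ^ 2 * ‖x - y‖ ^ 2 - 2 * α * n) * barrier α y x := by
  have h1 : ∀ z, HasFDerivAt (barrier α y)
      ((-2 * α * barrier α y z) • innerSL ℝ (z - y)) z := by
    intro z
    have h0 : HasFDerivAt (fun z => z - y) (ContinuousLinearMap.id ℝ _) z :=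
      (hasFDerivAt_id z).sub_const y
    have h := ((h0.norm_sq).const_mul (-α)).exp
    have he : (-2 * α * barrier α y z) • innerSL ℝ (z - y) = Real.exp (-α * ‖z - y‖ ^ 2) •
        -α • 2 • (innerSL ℝ (z - y)) ∘SL ContinuousLinearMap.id ℝ _ := by
      ext v
      simp [barrier]
      ring
    rw [he]
    exact h
  have h1' : fderiv ℝ (barrier α y) = fun z => (-2 * α * barrier α y z) • innerSL ℝ (z - y) :=
    funext fun z => (h1 z).fderiv
  have h2 : ∀ v, fderiv ℝ (fderiv ℝ (barrier α y)) x v v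
      = (4 * α ^ 2 * ⟪x - y, v⟫ ^ 2 - 2 * α * ‖v‖ ^ 2) * barrier α y x := by
    intro v
    have h0 : HasFDerivAt (fun z => innerSL ℝ (z - y))
        (innerSL ℝ : EuclideanSpace ℝ (Fin n) →L[ℝ] _) x :=
      (innerSL ℝ).hasFDerivAt.comp x ((hasFDerivAt_id x).sub_const y)
    have h := ((h1 x).const_mul (-2 * α)).smul h0
    have h' := h.fderiv
    rw [h1']
    refine (congrArg (fun A => A v v) h').trans ?_
    change (-2 * α * barrier α y x) * ⟪v, v⟫
      + ((-2 * α) * ((-2 * α * barrier α y x) * ⟪x - y, v⟫)) * ⟪x - y, v⟫ = _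
    rw [real_inner_self_eq_norm_sq]
    ring
  rw [lap_eq_sum_fderiv]
  simp only [h2, ← Finset.sum_mul]
  congr 1
  rw [Finset.sum_sub_distrib, ← Finset.mul_sum, sum_inner_single_sq]
  simp
  ring

/-- Hopf's boundary point lemma, in quantitative form: a positive `w` with `Δw ≤ K w` in a ball
grows at least linearly along the inner normal at each boundary point `p`. -/
theorem hopf_growth {n : ℕ} {w : EuclideanSpace ℝ (Fin n) → ℝ} {y p : EuclideanSpace ℝ (Fin n)}
    {r K : ℝ} (hr : 0 < r) (hK : 0 ≤ K) (hc : ContinuousOn w (closedBall y r))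
    (hw : ∀ x ∈ ball y r, ContDiffAt ℝ 2 w x) (hpos : ∀ x ∈ ball y r, 0 < w x)
    (hlap : ∀ x ∈ ball y r, lap w x ≤ K * w x) (hp : ‖p - y‖ = r) :
    ∃ c > 0, ∀ t ∈ Icc (0 : ℝ) (1 / 2), c * t ≤ w (p + t • (y - p)) := by
  -- `α` is large enough for the barrier `h` to satisfy `Δh > K h` in the annulus `r / 2 ≤ |x - y| ≤ r`
  set α : ℝ := (2 * n + K + 1) / r ^ 2 + 1 with hα
  have hα1 : 1 ≤ α := by rw [hα]; have : 0 ≤ (2 * n + K + 1) / r ^ 2 := by positivity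
                         linarith
  have hα2 : 2 * n + K + 1 ≤ α * r ^ 2 := by
    rw [hα, add_mul, div_mul_cancel₀ _ (by positivity)]; nlinarith [sq_nonneg r]
  set b : ℝ := Real.exp (-α * r ^ 2) with hb
  have hbpos : 0 < b := Real.exp_pos _
  have hwnn : ∀ x ∈ closedBall y r, 0 ≤ w x := by
    intro x hx
    rw [← closure_ball y hr.ne'] at hx hc
    exact closure_minimal (t := Ici 0) (fun z hz => (by
        obtain ⟨q, hq, rfl⟩ := hz
        exact (hpos q hq).le)) isClosed_Ici
      (hc.image_closure ⟨x, hx, rfl⟩)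
  obtain ⟨m, hm, hmw⟩ : ∃ m > 0, ∀ x ∈ closedBall y (r / 2), m ≤ w x := by
    have hsub : closedBall y (r / 2) ⊆ ball y r := closedBall_subset_ball (by linarith)
    obtain ⟨z, hz, hzm⟩ := (isCompact_closedBall y (r / 2)).exists_isMinOn
      ⟨y, mem_closedBall_self (by linarith)⟩ (hc.mono (hsub.trans ball_subset_closedBall))
    exact ⟨w z, hpos z (hsub hz), fun x hx => hzm hx⟩
  have hbar1 : ∀ x, barrier α y x ≤ 1 := fun x => by
    unfold barrier
    rw [Real.exp_le_one_iff]
    have : 0 ≤ α * ‖x - y‖ ^ 2 := by positivity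
    linarith
  set v : EuclideanSpace ℝ (Fin n) → ℝ := fun x => w x - m * barrier α y x with hv
  -- a minimum of `v` below `-m b` would be attained inside the annulus, where `Δv < K v < 0`
  have key : ∀ x ∈ closedBall y r \ ball y (r / 2), -(m * b) ≤ v x := by
    by_contra! hcon
    obtain ⟨x₁, hx₁, hx₁v⟩ := hcon
    have hcomp : IsCompact (closedBall y r \ ball y (r / 2)) :=
      (isCompact_closedBall y r).diff isOpen_ball
    have hvc : ContinuousOn v (closedBall y r \ ball y (r / 2)) :=
      (hc.mono sdiff_subset).sub
        (continuous_const.mul (barrier_contDiff α y).continuous).continuousOn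
    obtain ⟨z, hz, hzm⟩ := hcomp.exists_isMinOn ⟨x₁, hx₁⟩ hvc
    have hvz : v z < -(m * b) := lt_of_le_of_lt (hzm hx₁) hx₁v
    have hz1 : ‖z - y‖ ≤ r := by simpa [dist_eq_norm] using hz.1
    have hz2 : r / 2 ≤ ‖z - y‖ := by simpa [dist_eq_norm] using hz.2
    have hzr : ‖z - y‖ < r := by
      refine lt_of_le_of_ne hz1 fun h => ?_
      have : barrier α y z = b := by simp [barrier, h, hb]
      have h2 := hwnn z hz.1
      simp only [hv, this] at hvz
      linarith
    have hzr2 : r / 2 < ‖z - y‖ := by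
      refine lt_of_le_of_ne hz2 fun h => ?_
      have h2 := hmw z (by simp [dist_eq_norm, h])
      have h3 := mul_le_mul_of_nonneg_left (hbar1 z) hm.le
      simp only [hv] at hvz
      nlinarith
    have hzb : z ∈ ball y r := by simpa [dist_eq_norm] using hzr
    have hloc : IsLocalMin v z := by
      refine hzm.isLocalMin ?_
      have h1 : ball y r ∩ (closedBall y (r / 2))ᶜ ∈ 𝓝 z :=
        (isOpen_ball.inter isClosed_closedBall.isOpen_compl).mem_nhds
          ⟨hzb, by simpa [dist_eq_norm] using hzr2⟩
      filter_upwards [h1] with q hq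
      exact ⟨ball_subset_closedBall hq.1, fun hq' => hq.2 (ball_subset_closedBall hq')⟩
    have hwz := hw z hzb
    have hbz : ContDiffAt ℝ 2 (barrier α y) z := (barrier_contDiff α y).contDiffAt
    have h0 := lap_nonneg_of_isLocalMin (hwz.sub (contDiffAt_const.mul hbz)) hloc
    have h0' : 0 ≤ lap w z - m * lap (barrier α y) z := by
      rw [← lap_const_mul m hbz, ← lap_sub hwz (contDiffAt_const.mul hbz)]
      exact h0
    have hbp : 0 < barrier α y z := Real.exp_pos _
    have h3 := hlap z hzb
    rw [lap_barrier] at h0'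
    have h4 : K + 1 ≤ 4 * α ^ 2 * ‖z - y‖ ^ 2 - 2 * α * n := by
      have h5 : r ^ 2 / 4 ≤ ‖z - y‖ ^ 2 := by nlinarith
      have h6 : 4 * α ^ 2 * (r ^ 2 / 4) ≤ 4 * α ^ 2 * ‖z - y‖ ^ 2 := by gcongr
      have h7 : α * (2 * n + K + 1) ≤ α * (α * r ^ 2) := by gcongr
      nlinarith
    have h8 : m * ((K + 1) * barrier α y z)
        ≤ m * ((4 * α ^ 2 * ‖z - y‖ ^ 2 - 2 * α * n) * barrier α y z) := by gcongr
    simp only [hv] at hvz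
    have h9 : K * w z ≤ K * (m * barrier α y z) := by
      gcongr
      nlinarith [mul_pos hm hbpos]
    nlinarith [mul_pos hm hbp]
  refine ⟨m * (b * (α * r ^ 2)), by positivity, fun t ht => ?_⟩
  have hn : ‖p + t • (y - p) - y‖ = (1 - t) * r := by
    rw [show p + t • (y - p) - y = (1 - t) • (p - y) by module, norm_smul, hp,
      Real.norm_of_nonneg (by linarith [ht.2])]
  have hk := key (p + t • (y - p)) ⟨by simp only [mem_closedBall, dist_eq_norm, hn]; nlinarith [ht.1],
    by simp only [mem_ball, dist_eq_norm, hn, not_lt]; nlinarith [ht.2]⟩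
  have hbar : b * (1 + α * r ^ 2 * t) ≤ barrier α y (p + t • (y - p)) := by
    have h1 : barrier α y (p + t • (y - p))
        = b * Real.exp (α * r ^ 2 * (2 * t - t ^ 2)) := by
      rw [barrier, hn, hb, ← Real.exp_add]
      congr 1
      ring
    rw [h1]
    gcongr
    have h2 := Real.add_one_le_exp (α * r ^ 2 * (2 * t - t ^ 2))
    have h3 : α * r ^ 2 * t ≤ α * r ^ 2 * (2 * t - t ^ 2) := by
      gcongr
      nlinarith [ht.1, ht.2]
    linarith
  have h4 := mul_le_mul_of_nonneg_left hbar hm.le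
  simp only [hv] at hk
  nlinarith

/-- Hopf's boundary point lemma for the derivative along the inner normal. -/
theorem hopf_lemma {n : ℕ} {w : EuclideanSpace ℝ (Fin n) → ℝ} {y p : EuclideanSpace ℝ (Fin n)}
    {r K : ℝ} (hr : 0 < r) (hK : 0 ≤ K) (hc : ContinuousOn w (closedBall y r))
    (hw : ∀ x ∈ ball y r, ContDiffAt ℝ 2 w x) (hpos : ∀ x ∈ ball y r, 0 < w x)
    (hlap : ∀ x ∈ ball y r, lap w x ≤ K * w x) (hp : ‖p - y‖ = r) (hwp : w p = 0)
    {D : EuclideanSpace ℝ (Fin n) →L[ℝ] ℝ} (hD : HasFDerivWithinAt w D (closedBall y r) p) :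
    0 < D (y - p) := by
  obtain ⟨c, hc0, hcw⟩ := hopf_growth hr hK hc hw hpos hlap hp
  have hline : HasDerivWithinAt (fun t : ℝ => p + t • (y - p)) (y - p) (Icc 0 1) 0 := by
    simpa using (((hasDerivAt_id (0 : ℝ)).smul_const (y - p)).const_add p).hasDerivWithinAt
  have hmaps : MapsTo (fun t : ℝ => p + t • (y - p)) (Icc 0 1) (closedBall y r) := by
    intro t ht
    rw [mem_closedBall, dist_eq_norm,
      show p + t • (y - p) - y = (1 - t) • (p - y) by module, norm_smul, hp,
      Real.norm_of_nonneg (by linarith [ht.2])]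
    nlinarith [ht.1]
  have hder : HasDerivWithinAt (fun t : ℝ => w (p + t • (y - p))) (D (y - p)) (Icc 0 1) 0 :=
    HasFDerivWithinAt.comp_hasDerivWithinAt (l := w) (0 : ℝ) (by simpa using hD) hline hmaps
  refine lt_of_lt_of_le hc0 ?_
  have hsub : HasDerivWithinAt (fun t : ℝ => w (p + t • (y - p)) - c * t) (D (y - p) - c)
      (Icc 0 1) 0 := by
    have h := hder.sub ((hasDerivWithinAt_id (0 : ℝ) _).const_mul c)
    rw [mul_one] at h
    exact h
  have hmin : IsLocalMinOn (fun t : ℝ => w (p + t • (y - p)) - c * t) (Icc 0 1) 0 := by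
    have h1 : Iio (1 / 2 : ℝ) ∈ 𝓝[Icc 0 1] (0 : ℝ) :=
      mem_nhdsWithin_of_mem_nhds (Iio_mem_nhds (by norm_num))
    filter_upwards [h1, self_mem_nhdsWithin] with t ht1 ht2
    have := hcw t ⟨ht2.1, ht1.le⟩
    simp [hwp]
    linarith
  have := hmin.hasFDerivWithinAt_nonneg hsub.hasFDerivWithinAt
    (y := 1) (mem_posTangentConeAt_of_segment_subset (by simp [segment_eq_Icc]))
  have h2 : 0 ≤ D (y - p) - c := by simpa using this
  linarith

/-- Strong maximum principle for nonnegative supersolutions of `Δw = K w`. -/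
theorem strong_max_principle {n : ℕ} {w : EuclideanSpace ℝ (Fin n) → ℝ}
    {Ω : Set (EuclideanSpace ℝ (Fin n))} (hΩ : IsOpen Ω) (hconn : IsPreconnected Ω)
    {K : ℝ} (hK : 0 ≤ K) (hw : ∀ x ∈ Ω, ContDiffAt ℝ 2 w x) (hnn : ∀ x ∈ Ω, 0 ≤ w x)
    (hlap : ∀ x ∈ Ω, lap w x ≤ K * w x) (hex : ∃ x ∈ Ω, 0 < w x) :
    ∀ x ∈ Ω, 0 < w x := by
  have hcont : ContinuousOn w Ω := fun x hx => (hw x hx).continuousAt.continuousWithinAt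
  set P : Set (EuclideanSpace ℝ (Fin n)) := Ω ∩ w ⁻¹' Ioi 0 with hP
  have hPo : IsOpen P := hcont.isOpen_inter_preimage hΩ isOpen_Ioi
  have hsub : Ω ⊆ P := by
    refine hconn.subset_of_closure_inter_subset hPo ?_ ?_
    · obtain ⟨x, hx, hx0⟩ := hex
      exact ⟨x, hx, hx, hx0⟩
    · rintro z ⟨hzc, hz⟩
      by_contra hzP
      have hwz : w z = 0 := le_antisymm (not_lt.1 fun h => hzP ⟨hz, h⟩) (hnn z hz)
      obtain ⟨ρ, hρ, hρΩ⟩ := Metric.isOpen_iff.1 hΩ z hz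
      obtain ⟨y, hyP, hyz⟩ := Metric.mem_closure_iff.1 hzc (ρ / 4) (by positivity)
      -- `p` is a zero of `w` nearest to `y`
      have hcb : closedBall z (ρ / 2) ⊆ Ω := (closedBall_subset_ball (by linarith)).trans hρΩ
      have hZ : IsCompact (closedBall z (ρ / 2) ∩ w ⁻¹' {0}) := by
        refine (isCompact_closedBall z (ρ / 2)).of_isClosed_subset ?_ inter_subset_left
        exact (hcont.mono hcb).preimage_isClosed_of_isClosed isClosed_closedBall
          isClosed_singleton
      obtain ⟨p, hpZ, hpmin⟩ := hZ.exists_isMinOn (f := fun q => dist q y)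
        ⟨z, mem_closedBall_self (by positivity), hwz⟩ (by fun_prop)
      have hpy : dist p y ≤ dist z y := hpmin ⟨mem_closedBall_self (by positivity), hwz⟩
      have hr : 0 < dist p y := by
        rw [dist_pos]
        rintro rfl
        have h1 : w p = 0 := hpZ.2
        have h2 : 0 < w p := hyP.2
        exact h2.ne' h1
      have hballs : closedBall y (dist p y) ⊆ closedBall z (ρ / 2) := by
        intro q hq
        rw [mem_closedBall] at hq ⊢
        have := dist_triangle q y z
        rw [dist_comm y z] at this
        linarith
      have hpΩ : p ∈ Ω := hcb hpZ.1
      have hmin : IsLocalMin w p := by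
        filter_upwards [hΩ.mem_nhds hpΩ] with q hq
        rw [show w p = 0 from hpZ.2]
        exact hnn q hq
      have hD := ((hw p hpΩ).differentiableAt (by simp)).hasFDerivAt
      have h := hopf_lemma hr hK (hcont.mono (hballs.trans hcb))
        (fun x hx => hw x (hcb (hballs (ball_subset_closedBall hx))))
        (fun x hx => by
          have hxz := hballs (ball_subset_closedBall hx)
          refine lt_of_le_of_ne (hnn x (hcb hxz)) fun h0 => ?_
          have : dist p y ≤ dist x y := hpmin ⟨hxz, h0.symm⟩
          exact absurd hx (by simpa using this))
        (fun x hx => hlap x (hcb (hballs (ball_subset_closedBall hx))))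
        (dist_eq_norm p y).symm hpZ.2 hD.hasFDerivWithinAt
      rw [hmin.fderiv_eq_zero] at h
      simp at h
  exact fun x hx => (hsub hx).2
/-! ### Positive solutions on a ball centred at the origin -/

/-- The standing hypotheses for the moving plane argument. `D` and `H` are the first and second
derivatives of `u` on the closed ball of radius `R` about the origin. The equation `-Δu = f(u)`
enters only through `lap_le`, which encodes that `f` is the sum of a function with Lipschitz
constant `K` on the range of `u` and of a non-decreasing function. -/
structure PosSol {n : ℕ} (R K : ℝ) (u : EuclideanSpace ℝ (Fin n) → ℝ)
    (D : EuclideanSpace ℝ (Fin n) → EuclideanSpace ℝ (Fin n) →L[ℝ] ℝ)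
    (H : EuclideanSpace ℝ (Fin n) →
      EuclideanSpace ℝ (Fin n) →L[ℝ] EuclideanSpace ℝ (Fin n) →L[ℝ] ℝ) : Prop where
  R_pos : 0 < R
  K_nonneg : 0 ≤ K
  hasD : ∀ x ∈ closedBall 0 R, HasFDerivWithinAt u (D x) (closedBall 0 R) x
  hasH : ∀ x ∈ closedBall 0 R, HasFDerivWithinAt D (H x) (closedBall 0 R) x
  contH : ContinuousOn H (closedBall 0 R)
  symm : ∀ x ∈ closedBall 0 R, ∀ v w, H x v w = H x w v
  contDiff : ∀ x ∈ ball 0 R, ContDiffAt ℝ 2 u x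
  lap_eq : ∀ x ∈ ball 0 R, lap u x = ∑ i : Fin n, H x (EuclideanSpace.single i 1)
    (EuclideanSpace.single i 1)
  pos : ∀ x ∈ ball 0 R, 0 < u x
  bdry : ∀ x, ‖x‖ = R → u x = 0
  lap_le : ∀ x ∈ ball 0 R, ∀ y ∈ ball 0 R, u y ≤ u x → lap u x - lap u y ≤ K * (u x - u y)

namespace PosSol

variable {n : ℕ} {R K : ℝ} {u : EuclideanSpace ℝ (Fin n) → ℝ}
  {D : EuclideanSpace ℝ (Fin n) → EuclideanSpace ℝ (Fin n) →L[ℝ] ℝ}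
  {H : EuclideanSpace ℝ (Fin n) →
    EuclideanSpace ℝ (Fin n) →L[ℝ] EuclideanSpace ℝ (Fin n) →L[ℝ] ℝ}

theorem contU (S : PosSol R K u D H) : ContinuousOn u (closedBall 0 R) :=
  fun x hx => (S.hasD x hx).continuousWithinAt

theorem contD (S : PosSol R K u D H) : ContinuousOn D (closedBall 0 R) :=
  fun x hx => (S.hasH x hx).continuousWithinAt

theorem contD_apply (S : PosSol R K u D H) (v : EuclideanSpace ℝ (Fin n)) :
    ContinuousOn (fun x => D x v) (closedBall 0 R) :=
  S.contD.clm_apply continuousOn_const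

theorem contH_apply (S : PosSol R K u D H) (v w : EuclideanSpace ℝ (Fin n)) :
    ContinuousOn (fun x => H x v w) (closedBall 0 R) :=
  (S.contH.clm_apply continuousOn_const).clm_apply continuousOn_const

theorem hasFDerivAt (S : PosSol R K u D H) {x : EuclideanSpace ℝ (Fin n)} (hx : x ∈ ball 0 R) :
    HasFDerivAt u (D x) x :=
  (S.hasD x (ball_subset_closedBall hx)).hasFDerivAt
    (mem_of_superset (isOpen_ball.mem_nhds hx) ball_subset_closedBall)

theorem nonneg (S : PosSol R K u D H) {x : EuclideanSpace ℝ (Fin n)}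
    (hx : x ∈ closedBall 0 R) : 0 ≤ u x := by
  rcases (mem_closedBall_zero_iff.1 hx).lt_or_eq with h | h
  · exact (S.pos x (mem_ball_zero_iff.2 h)).le
  · exact (S.bdry x h).ge

/-! #### Derivatives at the boundary -/

/-- The great circle through `p` with velocity `τ`. -/
def circ (p τ : EuclideanSpace ℝ (Fin n)) (s : ℝ) : EuclideanSpace ℝ (Fin n) :=
  Real.cos s • p + Real.sin s • τ

theorem norm_circ {p τ : EuclideanSpace ℝ (Fin n)} (hR : 0 < R) (hp : ‖p‖ = R) (hτ : ‖τ‖ = R)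
    (hpτ : ⟪p, τ⟫ = 0) (s : ℝ) : ‖circ p τ s‖ = R := by
  have h : ‖circ p τ s‖ ^ 2 = R ^ 2 := by
    rw [circ, norm_add_sq_real, norm_smul, norm_smul, inner_smul_left, inner_smul_right, hpτ, hp, hτ,
      mul_pow, mul_pow, Real.norm_eq_abs, Real.norm_eq_abs, sq_abs, sq_abs]
    have := Real.sin_sq_add_cos_sq s
    linear_combination R ^ 2 * this
  exact (sq_eq_sq₀ (norm_nonneg _) hR.le).1 h

theorem hasDerivAt_circ (p τ : EuclideanSpace ℝ (Fin n)) : HasDerivAt (circ p τ) τ 0 := by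
  have h := ((Real.hasDerivAt_cos 0).smul_const p).add ((Real.hasDerivAt_sin 0).smul_const τ)
  simp only [Real.sin_zero, neg_zero, zero_smul, Real.cos_zero, one_smul, zero_add] at h
  exact h

theorem circ_zero (p τ : EuclideanSpace ℝ (Fin n)) : circ p τ 0 = p := by simp [circ]

theorem tangential_aux (S : PosSol R K u D H) {p τ : EuclideanSpace ℝ (Fin n)} (hp : ‖p‖ = R)
    (hτ : ‖τ‖ = R) (hpτ : ⟪p, τ⟫ = 0) : D p τ = 0 := by
  have hnorm := norm_circ S.R_pos hp hτ hpτ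
  have h1 : HasDerivAt (fun s => u (circ p τ s)) (D p τ) 0 :=
    HasFDerivWithinAt.comp_hasDerivAt_of_eq (l := u) (0 : ℝ)
      (S.hasD p (by simp [hp])) (hasDerivAt_circ p τ)
      (Eventually.of_forall fun s => by simp [hnorm s]) (circ_zero p τ).symm
  have h2 : (fun s => u (circ p τ s)) = fun _ => 0 := funext fun s => S.bdry _ (hnorm s)
  rw [h2] at h1
  exact h1.unique (hasDerivAt_const _ _)

theorem exists_scale (hR : 0 < R) (τ : EuclideanSpace ℝ (Fin n)) :
    τ = 0 ∨ ∃ (c : ℝ) (σ : EuclideanSpace ℝ (Fin n)), ‖σ‖ = R ∧ τ = c • σ ∧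
      ∀ p, ⟪p, τ⟫ = 0 → ⟪p, σ⟫ = 0 := by
  by_cases h : τ = 0
  · exact Or.inl h
  · have hn : ‖τ‖ ≠ 0 := norm_ne_zero_iff.2 h
    refine Or.inr ⟨‖τ‖ / R, (R / ‖τ‖) • τ, ?_, ?_, ?_⟩
    · rw [norm_smul, Real.norm_of_nonneg (by positivity), div_mul_cancel₀ _ hn]
    · rw [smul_smul, div_mul_div_comm, mul_comm, div_self (by positivity), one_smul]
    · intro p hp
      rw [inner_smul_right, hp, mul_zero]

/-- The gradient is normal at the boundary. -/
theorem deriv_bdry (S : PosSol R K u D H) {p : EuclideanSpace ℝ (Fin n)} (hp : ‖p‖ = R)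
    (v : EuclideanSpace ℝ (Fin n)) : D p v = ⟪p, v⟫ / R ^ 2 * D p p := by
  have hR := S.R_pos
  have h0 : D p (v - (⟪p, v⟫ / R ^ 2) • p) = 0 := by
    have horth : ⟪p, v - (⟪p, v⟫ / R ^ 2) • p⟫ = 0 := by
      rw [inner_sub_right, inner_smul_right, real_inner_self_eq_norm_sq, hp]
      field_simp
      ring
    rcases exists_scale hR (v - (⟪p, v⟫ / R ^ 2) • p) with h | ⟨c, σ, hσ, hc, ho⟩
    · rw [h, map_zero]
    · rw [hc, map_smul, S.tangential_aux hp hσ (ho p horth), smul_zero]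
  rw [map_sub, map_smul, smul_eq_mul] at h0
  linarith

theorem deriv_radial_nonpos (S : PosSol R K u D H) {p : EuclideanSpace ℝ (Fin n)}
    (hp : ‖p‖ = R) : D p p ≤ 0 := by
  have hpm : p ∈ closedBall (0 : EuclideanSpace ℝ (Fin n)) R := by simp [hp]
  have hmin : IsLocalMinOn u (closedBall 0 R) p := by
    filter_upwards [self_mem_nhdsWithin] with x hx
    rw [S.bdry p hp]
    exact S.nonneg hx
  have h := hmin.hasFDerivWithinAt_nonneg (S.hasD p hpm) (y := 0 - p)
    (sub_mem_posTangentConeAt_of_segment_subset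
      ((convex_closedBall _ _).segment_subset hpm (by simp [S.R_pos.le])))
  simpa using h

/-- At a boundary point where the gradient vanishes, the Hessian kills tangential vectors: the
function `x ↦ D x x` on the sphere is non-positive and vanishes at `p`, so its derivative
along the sphere is zero. -/
theorem hess_tangential_aux (S : PosSol R K u D H) {p τ : EuclideanSpace ℝ (Fin n)}
    (hp : ‖p‖ = R) (hDp : D p = 0) (hτ : ‖τ‖ = R) (hpτ : ⟪p, τ⟫ = 0) : H p τ = 0 := by
  have hR := S.R_pos
  have hnorm := norm_circ hR hp hτ hpτ
  have hc := hasDerivAt_circ p τ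
  have h1 : HasDerivAt (fun s => D (circ p τ s)) (H p τ) 0 :=
    HasFDerivWithinAt.comp_hasDerivAt_of_eq (l := D) (0 : ℝ)
      (S.hasH p (by simp [hp])) hc
      (Eventually.of_forall fun s => by simp [hnorm s]) (circ_zero p τ).symm
  have h2 : HasDerivAt (fun s => D (circ p τ s) (circ p τ s)) (H p τ p) 0 := by
    have := h1.clm_apply hc
    simpa [circ_zero, hDp] using this
  have h3 : H p τ p = 0 := by
    have hmax : IsLocalMax (fun s => D (circ p τ s) (circ p τ s)) 0 :=
      Eventually.of_forall fun s => by
        simp only [circ_zero, hDp]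
        simpa using S.deriv_radial_nonpos (hnorm s)
    exact hmax.hasDerivAt_eq_zero h2
  ext v
  have h4 : HasDerivAt (fun s => D (circ p τ s) v) (H p τ v) 0 := by
    simpa using h1.clm_apply (hasDerivAt_const (0 : ℝ) v)
  have h5 : HasDerivAt (fun s => ⟪circ p τ s, v⟫ / R ^ 2) (⟪τ, v⟫ / R ^ 2) 0 := by
    have := (hc.inner ℝ (hasDerivAt_const (0 : ℝ) v)).div_const (R ^ 2)
    simpa using this
  have h6 : HasDerivAt (fun s => D (circ p τ s) v)
      (⟪τ, v⟫ / R ^ 2 * D (circ p τ 0) (circ p τ 0) + ⟪circ p τ 0, v⟫ / R ^ 2 * H p τ p) 0 := by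
    have h7 : (fun s => D (circ p τ s) v)
        = fun s => ⟪circ p τ s, v⟫ / R ^ 2 * D (circ p τ s) (circ p τ s) :=
      funext fun s => S.deriv_bdry (hnorm s) v
    rw [h7]
    exact h5.mul h2
  have := h4.unique h6
  simpa [circ_zero, hDp, h3] using this

/-- At a boundary point where the gradient vanishes, the Hessian is a multiple of the square of the
normal covector; its trace then determines the multiple. -/
theorem hess_bdry (S : PosSol R K u D H) {p : EuclideanSpace ℝ (Fin n)}
    (hp : ‖p‖ = R) (hDp : D p = 0) (v : EuclideanSpace ℝ (Fin n)) :
    H p v v = (⟪p, v⟫ / R ^ 2) ^ 2 * H p p p := by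
  have hR := S.R_pos
  have h0 : H p (v - (⟪p, v⟫ / R ^ 2) • p) = 0 := by
    have horth : ⟪p, v - (⟪p, v⟫ / R ^ 2) • p⟫ = 0 := by
      rw [inner_sub_right, inner_smul_right, real_inner_self_eq_norm_sq, hp]
      field_simp
      ring
    rcases exists_scale hR (v - (⟪p, v⟫ / R ^ 2) • p) with h | ⟨c, σ, hσ, hc, ho⟩
    · rw [h, map_zero]
    · rw [hc, map_smul, S.hess_tangential_aux hp hDp hσ (ho p horth), smul_zero]
  rw [map_sub, map_smul, sub_eq_zero] at h0
  rw [h0, _root_.smul_apply, smul_eq_mul, S.symm p (by simp [hp]) p v, h0,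
    _root_.smul_apply, smul_eq_mul]
  ring

theorem sum_hess_bdry (S : PosSol R K u D H) {p : EuclideanSpace ℝ (Fin n)}
    (hp : ‖p‖ = R) (hDp : D p = 0) :
    ∑ i : Fin n, H p (EuclideanSpace.single i 1) (EuclideanSpace.single i 1)
      = H p p p / R ^ 2 := by
  have hR := S.R_pos
  simp only [S.hess_bdry hp hDp (EuclideanSpace.single _ 1), div_pow, ← Finset.sum_mul, ← Finset.sum_div,
    sum_inner_single_sq, hp]
  field_simp

/-- If the boundary value of `Δu` is non-positive at `p`, Hopf's lemma applies to `u` itself. -/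
theorem deriv_bdry_neg (S : PosSol R K u D H) {p : EuclideanSpace ℝ (Fin n)} (hp : ‖p‖ = R)
    (hL : ∑ i : Fin n, H p (EuclideanSpace.single i 1) (EuclideanSpace.single i 1) ≤ 0) :
    D p p < 0 := by
  have hR := S.R_pos
  have hpm : p ∈ closedBall (0 : EuclideanSpace ℝ (Fin n)) R := by simp [hp]
  have hcl : p ∈ closure (ball (0 : EuclideanSpace ℝ (Fin n)) R) := by
    rwa [closure_ball _ hR.ne']
  have : (𝓝[ball (0 : EuclideanSpace ℝ (Fin n)) R] p).NeBot :=
    mem_closure_iff_nhdsWithin_neBot.1 hcl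
  have hle : 𝓝[ball (0 : EuclideanSpace ℝ (Fin n)) R] p ≤ 𝓝[closedBall 0 R] p :=
    nhdsWithin_mono _ ball_subset_closedBall
  have hu0 : Tendsto u (𝓝[ball 0 R] p) (𝓝 0) := by
    have := (S.contU p hpm).tendsto.mono_left hle
    rwa [S.bdry p hp] at this
  have hlap0 : Tendsto (lap u) (𝓝[ball 0 R] p) (𝓝 (∑ i : Fin n,
      H p (EuclideanSpace.single i 1) (EuclideanSpace.single i 1))) := by
    have h1 : Tendsto (fun x => ∑ i : Fin n,
        H x (EuclideanSpace.single i 1) (EuclideanSpace.single i 1)) (𝓝[ball 0 R] p)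
        (𝓝 (∑ i : Fin n, H p (EuclideanSpace.single i 1) (EuclideanSpace.single i 1))) := by
      refine tendsto_finsetSum _ fun i _ => ?_
      exact (S.contH_apply _ _ p hpm).tendsto.mono_left hle
    refine h1.congr' ?_
    filter_upwards [self_mem_nhdsWithin] with x hx
    exact (S.lap_eq x hx).symm
  have hKu : ∀ x ∈ ball (0 : EuclideanSpace ℝ (Fin n)) R, lap u x ≤ K * u x := by
    intro x hx
    have h1 : lap u x - ∑ i : Fin n, H p (EuclideanSpace.single i 1) (EuclideanSpace.single i 1)
        ≤ K * (u x - 0) := by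
      refine le_of_tendsto_of_tendsto (tendsto_const_nhds.sub hlap0)
        ((tendsto_const_nhds.sub hu0).const_mul K) ?_
      filter_upwards [self_mem_nhdsWithin, hu0.eventually (gt_mem_nhds (S.pos x hx))] with y hy hyx
      exact S.lap_le x hx y hy hyx.le
    linarith
  have h := hopf_lemma hR S.K_nonneg S.contU S.contDiff S.pos hKu (p := p) (by simpa using hp)
    (S.bdry p hp) (S.hasD p hpm)
  simpa using h

/-- Near a boundary point `p` with `⟪e, p⟫ > 0`, the solution is non-increasing in the direction
`e`. If `Δu ≤ 0` at `p`, Hopf's lemma makes the derivative at `p` negative. Otherwise the gradient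
at `p` either is non-zero, hence points inwards, or vanishes; in the latter case `H p e e > 0`, so
that the derivative increases along rays in the direction `e` up to a non-positive value at the
boundary. -/
theorem no_increase_near_bdry (S : PosSol R K u D H) {p e : EuclideanSpace ℝ (Fin n)}
    (he : ‖e‖ = 1) (hp : ‖p‖ = R) (hpe : 0 < ⟪e, p⟫) {y : ℕ → EuclideanSpace ℝ (Fin n)}
    (hy : ∀ k, y k ∈ ball 0 R) (hyp : Tendsto y atTop (𝓝 p)) (hDy : ∀ k, 0 < D (y k) e) :
    False := by
  have hR := S.R_pos
  have hpm : p ∈ closedBall (0 : EuclideanSpace ℝ (Fin n)) R := by simp [hp]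
  have hpe' : 0 < ⟪p, e⟫ := by rwa [real_inner_comm]
  have hDe : 0 ≤ D p e := by
    have h1 : Tendsto (fun k => D (y k) e) atTop (𝓝 (D p e)) :=
      (S.contD_apply e p hpm).tendsto.comp (tendsto_nhdsWithin_iff.2
        ⟨hyp, Eventually.of_forall fun k => ball_subset_closedBall (hy k)⟩)
    exact ge_of_tendsto' h1 fun k => (hDy k).le
  rw [S.deriv_bdry hp e] at hDe
  have hcoef : 0 < ⟪p, e⟫ / R ^ 2 := by positivity
  by_cases hL : ∑ i : Fin n, H p (EuclideanSpace.single i 1) (EuclideanSpace.single i 1) ≤ 0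
  · nlinarith [S.deriv_bdry_neg hp hL]
  push Not at hL
  have hDpp : D p p = 0 := le_antisymm (S.deriv_radial_nonpos hp) (by
    by_contra h
    push Not at h
    nlinarith)
  have hDp : D p = 0 := by
    ext v
    rw [S.deriv_bdry hp v, hDpp]
    simp
  have hHee : 0 < H p e e := by
    rw [S.sum_hess_bdry hp hDp] at hL
    rw [S.hess_bdry hp hDp]
    have : 0 < H p p p := by
      by_contra h
      push Not at h
      exact absurd hL (not_lt.2 (div_nonpos_of_nonpos_of_nonneg h (by positivity)))
    positivity
  -- `z k` is the point where the ray from `y k` in the direction `e` leaves the ball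
  set T : EuclideanSpace ℝ (Fin n) → ℝ := fun x =>
    -⟪e, x⟫ + Real.sqrt (⟪e, x⟫ ^ 2 + (R ^ 2 - ‖x‖ ^ 2)) with hT
  have hTc : Continuous T := by
    rw [hT]
    fun_prop
  have hTp : T p = 0 := by
    simp only [hT, hp, sub_self, add_zero, Real.sqrt_sq hpe.le]
    ring
  have hTlim : Tendsto (fun k => T (y k)) atTop (𝓝 0) := by
    rw [← hTp]
    exact (hTc.tendsto p).comp hyp
  have hTpos : ∀ k, 0 < T (y k) := by
    intro k
    have h1 : ‖y k‖ < R := by simpa using hy k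
    have h2 : 0 < R ^ 2 - ‖y k‖ ^ 2 := by nlinarith [norm_nonneg (y k)]
    have h3 : ⟪e, y k⟫ < Real.sqrt (⟪e, y k⟫ ^ 2 + (R ^ 2 - ‖y k‖ ^ 2)) :=
      Real.lt_sqrt_of_sq_lt (by linarith)
    simp only [hT]
    linarith
  set z : ℕ → EuclideanSpace ℝ (Fin n) := fun k => y k + T (y k) • e with hz
  have hzn : ∀ k, ‖z k‖ = R := by
    intro k
    have h1 : ‖y k‖ < R := by simpa using hy k
    have h2 : 0 < R ^ 2 - ‖y k‖ ^ 2 := by nlinarith [norm_nonneg (y k)]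
    have h3 := Real.sq_sqrt (show 0 ≤ ⟪e, y k⟫ ^ 2 + (R ^ 2 - ‖y k‖ ^ 2) by positivity)
    have h4 : ‖z k‖ ^ 2 = R ^ 2 := by
      simp only [hz]
      rw [norm_add_sq_real, inner_smul_right, norm_smul, he, mul_one, Real.norm_eq_abs, sq_abs,
        real_inner_comm]
      simp only [hT]
      linear_combination h3
    exact (sq_eq_sq₀ (norm_nonneg _) hR.le).1 h4
  have hzlim : Tendsto z atTop (𝓝 p) := by
    simpa using hyp.add (hTlim.smul_const e)
  have hze : ∀ᶠ k in atTop, 0 < ⟪z k, e⟫ := by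
    have : Tendsto (fun k => ⟪z k, e⟫) atTop (𝓝 ⟪p, e⟫) := hzlim.inner tendsto_const_nhds
    exact this.eventually (lt_mem_nhds hpe')
  have hxi : ∀ k, ∃ x ∈ segment ℝ (y k) (z k), D (z k) e - D (y k) e = H x (z k - y k) e := by
    intro k
    have hg : ∀ x ∈ closedBall (0 : EuclideanSpace ℝ (Fin n)) R,
        HasFDerivWithinAt (fun q => D q e) ((H x).flip e) (closedBall 0 R) x := by
      intro x hx
      have := (S.hasH x hx).clm_apply (hasFDerivWithinAt_const e x _)
      simpa using this
    obtain ⟨x, hx, hxe⟩ := domain_mvt hg (convex_closedBall _ _)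
      (ball_subset_closedBall (hy k)) (show z k ∈ _ by simp [hzn k])
    exact ⟨x, hx, hxe⟩
  choose ξ hξ hξe using hxi
  have hξm : ∀ k, ξ k ∈ closedBall (0 : EuclideanSpace ℝ (Fin n)) R := fun k =>
    (convex_closedBall _ _).segment_subset (ball_subset_closedBall (hy k)) (by simp [hzn k]) (hξ k)
  have hξlim : Tendsto ξ atTop (𝓝 p) := by
    have h1 : Tendsto (fun k => ξ k - y k) atTop (𝓝 0) := by
      have h2 : Tendsto (fun k => z k - y k) atTop (𝓝 0) := by simpa using hzlim.sub hyp
      refine squeeze_zero_norm (fun k => ?_) (tendsto_norm_zero.comp h2)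
      exact norm_sub_le_of_mem_segment (hξ k)
    simpa using h1.add hyp
  have hlim : Tendsto (fun k => H (ξ k) e e) atTop (𝓝 (H p e e)) :=
    (S.contH_apply e e p hpm).tendsto.comp (tendsto_nhdsWithin_iff.2
      ⟨hξlim, Eventually.of_forall hξm⟩)
  obtain ⟨k, hk1, hk2⟩ := (hze.and (hlim.eventually (lt_mem_nhds hHee))).exists
  have h1 : D (z k) e ≤ 0 := by
    rw [S.deriv_bdry (hzn k)]
    exact mul_nonpos_of_nonneg_of_nonpos (by positivity) (S.deriv_radial_nonpos (hzn k))
  have h2 := hξe k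
  rw [show z k - y k = T (y k) • e by simp [hz], map_smul, _root_.smul_apply,
    smul_eq_mul] at h2
  nlinarith [hDy k, mul_pos (hTpos k) hk2]

end PosSol

/-! ### Moving planes -/

/-- Reflection in the hyperplane `⟪e, x⟫ = l`, for a unit vector `e`. -/
def planeRefl {n : ℕ} (e : EuclideanSpace ℝ (Fin n)) (l : ℝ) (x : EuclideanSpace ℝ (Fin n)) :
    EuclideanSpace ℝ (Fin n) :=
  x + (2 * (l - ⟪e, x⟫)) • e

theorem norm_planeRefl_sq {n : ℕ} {e : EuclideanSpace ℝ (Fin n)} (he : ‖e‖ = 1) (l : ℝ)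
    (x : EuclideanSpace ℝ (Fin n)) :
    ‖planeRefl e l x‖ ^ 2 = ‖x‖ ^ 2 + 4 * l * (l - ⟪e, x⟫) := by
  rw [planeRefl, norm_add_sq_real, inner_smul_right, norm_smul, he, mul_one, Real.norm_eq_abs,
    sq_abs, real_inner_comm]
  ring

theorem planeRefl_eq_self {n : ℕ} {e : EuclideanSpace ℝ (Fin n)} {l : ℝ}
    {x : EuclideanSpace ℝ (Fin n)} (h : ⟪e, x⟫ = l) : planeRefl e l x = x := by
  simp [planeRefl, h]

theorem continuous_planeRefl {n : ℕ} (e : EuclideanSpace ℝ (Fin n)) :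
    Continuous fun q : ℝ × EuclideanSpace ℝ (Fin n) => planeRefl e q.1 q.2 := by
  unfold planeRefl
  fun_prop

theorem contDiff_planeRefl {n : ℕ} (e : EuclideanSpace ℝ (Fin n)) (l : ℝ) :
    ContDiff ℝ 2 (planeRefl e l) :=
  contDiff_id.add ((contDiff_const.mul (contDiff_const.sub
    (innerSL ℝ e).contDiff)).smul contDiff_const)

theorem hasFDerivAt_planeRefl {n : ℕ} (e : EuclideanSpace ℝ (Fin n)) (l : ℝ)
    (x : EuclideanSpace ℝ (Fin n)) :
    HasFDerivAt (planeRefl e l) (ContinuousLinearMap.id ℝ (EuclideanSpace ℝ (Fin n))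
      + (((2 : ℝ) • -(innerSL ℝ e)).smulRight e)) x := by
  have h1 : HasFDerivAt (fun x => ⟪e, x⟫) (innerSL ℝ e) x := (innerSL ℝ e).hasFDerivAt
  exact (hasFDerivAt_id x).add (((h1.const_sub l).const_mul 2).smul_const e)

theorem lap_comp_planeRefl {n : ℕ} (w : EuclideanSpace ℝ (Fin n) → ℝ)
    {e : EuclideanSpace ℝ (Fin n)} (he : ‖e‖ = 1) (l : ℝ) (x : EuclideanSpace ℝ (Fin n)) :
    lap (fun y => w (planeRefl e l y)) x = lap w (planeRefl e l x) := by
  have h : ∀ y, planeRefl e l y = (ℝ ∙ e)ᗮ.reflection y + (2 * l) • e := by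
    intro y
    rw [Submodule.reflection_orthogonal_apply, Submodule.reflection_singleton_apply, planeRefl, he]
    simp only [RCLike.ofReal_real_eq_id, id, one_pow, div_one]
    module
  simp only [h]
  rw [lap_comp_isometry (fun y => w (y + (2 * l) • e)) ((ℝ ∙ e)ᗮ.reflection) x, lap_comp_add]

/-- `u` does not decrease under reflection, in the hyperplane `⟪e, x⟫ = l`, of the cap of the ball
beyond that hyperplane. -/
def CapLe {n : ℕ} (R : ℝ) (u : EuclideanSpace ℝ (Fin n) → ℝ) (e : EuclideanSpace ℝ (Fin n))
    (l : ℝ) : Prop :=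
  ∀ x ∈ ball (0 : EuclideanSpace ℝ (Fin n)) R, l < ⟪e, x⟫ → u x ≤ u (planeRefl e l x)

namespace PosSol

variable {n : ℕ} {R K : ℝ} {u : EuclideanSpace ℝ (Fin n) → ℝ}
  {D : EuclideanSpace ℝ (Fin n) → EuclideanSpace ℝ (Fin n) →L[ℝ] ℝ}
  {H : EuclideanSpace ℝ (Fin n) →
    EuclideanSpace ℝ (Fin n) →L[ℝ] EuclideanSpace ℝ (Fin n) →L[ℝ] ℝ}

theorem planeRefl_mem_ball {e x : EuclideanSpace ℝ (Fin n)} (he : ‖e‖ = 1) {l : ℝ}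
    (hR : 0 < R) (hl : 0 ≤ l) (hx : x ∈ ball 0 R) (hlx : l ≤ ⟪e, x⟫) :
    planeRefl e l x ∈ ball 0 R := by
  rw [mem_ball_zero_iff] at hx ⊢
  have h := norm_planeRefl_sq he l x
  refine lt_of_pow_lt_pow_left₀ 2 hR.le ?_
  nlinarith [norm_nonneg x, mul_nonneg hl (sub_nonneg.2 hlx)]

theorem planeRefl_mem_ball' {e x : EuclideanSpace ℝ (Fin n)} (he : ‖e‖ = 1) {l : ℝ}
    (hR : 0 < R) (hl : 0 < l) (hx : ‖x‖ = R) (hlx : l < ⟪e, x⟫) :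
    planeRefl e l x ∈ ball 0 R := by
  rw [mem_ball_zero_iff]
  have h := norm_planeRefl_sq he l x
  refine lt_of_pow_lt_pow_left₀ 2 hR.le ?_
  rw [hx] at h
  nlinarith [mul_pos hl (sub_pos.2 hlx)]

theorem contDiffAt_diff (S : PosSol R K u D H) {e x : EuclideanSpace ℝ (Fin n)} {l : ℝ}
    (he : ‖e‖ = 1) (hl : 0 ≤ l) (hx : x ∈ ball 0 R) (hlx : l ≤ ⟪e, x⟫) :
    ContDiffAt ℝ 2 (fun y => u (planeRefl e l y) - u y) x :=
  ((S.contDiff _ (planeRefl_mem_ball he S.R_pos hl hx hlx)).comp x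
    (contDiff_planeRefl e l).contDiffAt).sub (S.contDiff x hx)

theorem lap_diff_le (S : PosSol R K u D H) {e x : EuclideanSpace ℝ (Fin n)} {l : ℝ}
    (he : ‖e‖ = 1) (hl : 0 ≤ l) (hx : x ∈ ball 0 R) (hlx : l ≤ ⟪e, x⟫)
    (hle : u x ≤ u (planeRefl e l x)) :
    lap (fun y => u (planeRefl e l y) - u y) x ≤ K * (u (planeRefl e l x) - u x) := by
  have hm := planeRefl_mem_ball he S.R_pos hl hx hlx
  have h1 : ContDiffAt ℝ 2 (fun y => u (planeRefl e l y)) x :=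
    (S.contDiff _ hm).comp x (contDiff_planeRefl e l).contDiffAt
  rw [lap_sub h1 (S.contDiff x hx), lap_comp_planeRefl u he]
  exact S.lap_le _ hm _ hx hle

/-- In the cap, `u` strictly increases under reflection, by the strong maximum principle. The
difference is not identically zero because it is positive at the boundary point `R • e`. -/
theorem cap_lt (S : PosSol R K u D H) {e : EuclideanSpace ℝ (Fin n)} {l : ℝ}
    (he : ‖e‖ = 1) (hl : 0 < l) (hlR : l < R) (hcap : CapLe R u e l) :
    ∀ x ∈ ball (0 : EuclideanSpace ℝ (Fin n)) R, l < ⟪e, x⟫ → u x < u (planeRefl e l x) := by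
  have hR := S.R_pos
  set Ω : Set (EuclideanSpace ℝ (Fin n)) := ball 0 R ∩ {x | l < ⟪e, x⟫} with hΩ
  have hhalf : IsOpen {x : EuclideanSpace ℝ (Fin n) | l < ⟪e, x⟫} :=
    isOpen_lt continuous_const (by fun_prop)
  have hconv : Convex ℝ Ω :=
    (convex_ball _ _).inter (convex_halfSpace_gt (innerSL ℝ e).toLinearMap.isLinear l)
  have hRe : ‖R • e‖ = R := by rw [norm_smul, he, mul_one, Real.norm_of_nonneg hR.le]
  have hReI : ⟪e, R • e⟫ = R := by
    rw [inner_smul_right, real_inner_self_eq_norm_sq, he]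
    ring
  have hRem : R • e ∈ closedBall (0 : EuclideanSpace ℝ (Fin n)) R := by simp [hRe]
  have hReR : planeRefl e l (R • e) ∈ ball 0 R :=
    planeRefl_mem_ball' he hR hl hRe (by rwa [hReI])
  have hlim : Tendsto (fun y => u (planeRefl e l y) - u y) (𝓝[ball 0 R] (R • e))
      (𝓝 (u (planeRefl e l (R • e)) - u (R • e))) := by
    refine Tendsto.sub ?_ ((S.contU _ hRem).tendsto.mono_left
      (nhdsWithin_mono _ ball_subset_closedBall))
    have h1 : ContinuousAt (fun y => u (planeRefl e l y)) (R • e) :=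
      ContinuousAt.comp (g := u) (S.contDiff _ hReR).continuousAt
        (contDiff_planeRefl e l).continuous.continuousAt
    exact h1.tendsto.mono_left nhdsWithin_le_nhds
  have : (𝓝[ball (0 : EuclideanSpace ℝ (Fin n)) R] (R • e)).NeBot :=
    mem_closure_iff_nhdsWithin_neBot.1 (by rwa [closure_ball _ hR.ne'])
  have hwpos : 0 < u (planeRefl e l (R • e)) - u (R • e) := by
    rw [S.bdry _ hRe, sub_zero]
    exact S.pos _ hReR
  have hev : ∀ᶠ y in 𝓝[ball 0 R] (R • e), l < ⟪e, y⟫ :=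
    mem_nhdsWithin_of_mem_nhds (hhalf.mem_nhds (by change l < ⟪e, R • e⟫; rw [hReI]; exact hlR))
  have hself : ∀ᶠ y in 𝓝[ball 0 R] (R • e), y ∈ ball 0 R := self_mem_nhdsWithin
  obtain ⟨a, ha1, ha2, ha3⟩ :=
    ((hlim.eventually (lt_mem_nhds hwpos)).and (hev.and hself)).exists
  have hmain := strong_max_principle (w := fun y => u (planeRefl e l y) - u y)
    (isOpen_ball.inter hhalf) hconv.isPreconnected
    S.K_nonneg (fun x hx => S.contDiffAt_diff he hl.le hx.1 (le_of_lt hx.2))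
    (fun x hx => sub_nonneg.2 (hcap x hx.1 hx.2))
    (fun x hx => S.lap_diff_le he hl.le hx.1 (le_of_lt hx.2) (hcap x hx.1 hx.2))
    ⟨a, ⟨ha3, ha2⟩, ha1⟩
  exact fun x hx hlx => sub_pos.1 (hmain x ⟨hx, hlx⟩)

/-- On the reflecting hyperplane, Hopf's lemma for the difference of `u` and its reflection gives
the sign of the derivative of `u` in the direction `e`. -/
theorem deriv_neg_of_cap (S : PosSol R K u D H) {e x : EuclideanSpace ℝ (Fin n)} {l : ℝ}
    (he : ‖e‖ = 1) (hl : 0 < l) (hlR : l < R) (hcap : CapLe R u e l) (hx : x ∈ ball 0 R)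
    (hxl : ⟪e, x⟫ = l) : D x e < 0 := by
  have hR := S.R_pos
  obtain ⟨r, hr, hrB⟩ : ∃ r > 0, closedBall (x + r • e) r ⊆ ball 0 R := by
    rw [mem_ball_zero_iff] at hx
    refine ⟨(R - ‖x‖) / 4, by linarith, fun q hq => ?_⟩
    rw [mem_closedBall, dist_eq_norm] at hq
    rw [mem_ball_zero_iff]
    have h1 : ‖q‖ ≤ ‖q - (x + ((R - ‖x‖) / 4) • e)‖ + (‖x‖ + ‖((R - ‖x‖) / 4) • e‖) := by
      calc ‖q‖ = ‖(q - (x + ((R - ‖x‖) / 4) • e)) + (x + ((R - ‖x‖) / 4) • e)‖ := by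
            rw [sub_add_cancel]
        _ ≤ _ := (norm_add_le _ _).trans (by gcongr; exact norm_add_le _ _)
    rw [norm_smul, he, mul_one, Real.norm_of_nonneg (by linarith)] at h1
    linarith
  -- a ball tangent to the hyperplane at `x` lies beyond it
  have hI : ∀ q, ⟪e, q⟫ = l + r + ⟪e, q - (x + r • e)⟫ := by
    intro q
    rw [inner_sub_right, inner_add_right, inner_smul_right, hxl, real_inner_self_eq_norm_sq, he]
    ring
  have hIle : ∀ q ∈ closedBall (x + r • e) r, l ≤ ⟪e, q⟫ := by
    intro q hq
    rw [mem_closedBall, dist_eq_norm] at hq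
    have h1 := abs_le.1 ((abs_real_inner_le_norm e (q - (x + r • e))).trans
      (by rw [he, one_mul]))
    rw [hI q]
    linarith [h1.1]
  have hIlt : ∀ q ∈ ball (x + r • e) r, l < ⟪e, q⟫ := by
    intro q hq
    rw [mem_ball, dist_eq_norm] at hq
    have h1 := abs_le.1 ((abs_real_inner_le_norm e (q - (x + r • e))).trans
      (by rw [he, one_mul]))
    rw [hI q]
    linarith [h1.1]
  have hC : ∀ q ∈ closedBall (x + r • e) r,
      ContDiffAt ℝ 2 (fun y => u (planeRefl e l y) - u y) q := fun q hq =>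
    S.contDiffAt_diff he hl.le (hrB hq) (hIle q hq)
  have hDx := S.hasFDerivAt hx
  have hDw : HasFDerivAt (fun y => u (planeRefl e l y) - u y)
      ((D x).comp (ContinuousLinearMap.id ℝ (EuclideanSpace ℝ (Fin n))
      + (((2 : ℝ) • -(innerSL ℝ e)).smulRight e)) - D x) x := by
    refine HasFDerivAt.sub ?_ hDx
    exact HasFDerivAt.comp (g := u) x (by rwa [planeRefl_eq_self hxl]) (hasFDerivAt_planeRefl e l x)
  have h := hopf_lemma (w := fun y => u (planeRefl e l y) - u y) (y := x + r • e) (p := x) hr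
    S.K_nonneg (fun q hq => (hC q hq).continuousAt.continuousWithinAt)
    (fun q hq => hC q (ball_subset_closedBall hq))
    (fun q hq => sub_pos.2 (S.cap_lt he hl hlR hcap q (hrB (ball_subset_closedBall hq)) (hIlt q hq)))
    (fun q hq => S.lap_diff_le he hl.le (hrB (ball_subset_closedBall hq)) (hIlt q hq).le
      (hcap q (hrB (ball_subset_closedBall hq)) (hIlt q hq)))
    (by simp [norm_smul, he, abs_of_pos hr])
    (by simp [planeRefl_eq_self hxl]) hDw.hasFDerivWithinAt
  have h2 : 0 < r * (-2 * D x e) := by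
    simp [he] at h
    linarith
  nlinarith [(mul_pos_iff_of_pos_left hr).1 h2]

/-- The plane can be moved slightly beyond an admissible position `l₀ > 0`: if the positions in a
sequence `l k → l₀` all failed, the points of failure would accumulate at a point excluded by the
strict inequalities for `l₀` or by the behaviour of `u` at the boundary. -/
theorem cap_step (S : PosSol R K u D H) {e : EuclideanSpace ℝ (Fin n)} (he : ‖e‖ = 1) {l₀ : ℝ}
    (hl₀ : 0 < l₀) (hcap : CapLe R u e l₀) {l : ℕ → ℝ}
    (hlnn : ∀ k, 0 ≤ l k) (hlim : Tendsto l atTop (𝓝 l₀)) (hbad : ∀ k, ¬ CapLe R u e (l k)) :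
    False := by
  have hR := S.R_pos
  simp only [CapLe, not_forall, not_le] at hbad
  choose x hxB hxl hxu using hbad
  obtain ⟨p, hp, φ, hφ, hφp⟩ := (isCompact_closedBall (0 : EuclideanSpace ℝ (Fin n)) R).tendsto_subseq
    (fun k => ball_subset_closedBall (hxB k))
  have hlφ : Tendsto (fun k => l (φ k)) atTop (𝓝 l₀) := hlim.comp hφ.tendsto_atTop
  have hpl : l₀ ≤ ⟪e, p⟫ := by
    refine le_of_tendsto_of_tendsto' hlφ
      ((tendsto_const_nhds (x := e)).inner hφp) fun k => (hxl (φ k)).le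
  have hpn : ‖p‖ ≤ R := by simpa using hp
  have hrB : ∀ k, planeRefl e (l k) (x k) ∈ ball (0 : EuclideanSpace ℝ (Fin n)) R := fun k =>
    planeRefl_mem_ball he hR (hlnn k) (hxB k) (hxl k).le
  have hrlim : Tendsto (fun k => planeRefl e (l (φ k)) (x (φ k))) atTop (𝓝 (planeRefl e l₀ p)) :=
    ((continuous_planeRefl e).tendsto (l₀, p)).comp (hlφ.prodMk_nhds hφp)
  have hrp : planeRefl e l₀ p ∈ closedBall (0 : EuclideanSpace ℝ (Fin n)) R :=
    isClosed_closedBall.mem_of_tendsto hrlim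
      (Eventually.of_forall fun k => ball_subset_closedBall (hrB (φ k)))
  have hule : u (planeRefl e l₀ p) ≤ u p := by
    refine le_of_tendsto_of_tendsto'
      ((S.contU _ hrp).tendsto.comp (tendsto_nhdsWithin_iff.2
        ⟨hrlim, Eventually.of_forall fun k => ball_subset_closedBall (hrB (φ k))⟩))
      ((S.contU _ hp).tendsto.comp (tendsto_nhdsWithin_iff.2
        ⟨hφp, Eventually.of_forall fun k => ball_subset_closedBall (hxB (φ k))⟩))
      fun k => (hxu (φ k)).le
  have hIp : ⟪e, p⟫ ≤ ‖p‖ := by simpa [he] using real_inner_le_norm e p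
  rcases hpl.lt_or_eq with hlt | heq
  · rcases hpn.lt_or_eq with hn | hn
    · exact absurd (S.cap_lt he hl₀ (by linarith) hcap p (by simpa using hn) hlt) (not_lt.2 hule)
    · have := S.pos _ (planeRefl_mem_ball' he hR hl₀ hn hlt)
      rw [S.bdry p hn] at hule
      linarith
  -- `p` lies on the limiting hyperplane; the mean value theorem yields points with `∂u/∂e > 0`
  have hmvt : ∀ k, ∃ y ∈ segment ℝ (planeRefl e (l k) (x k)) (x k), 0 < D y e := by
    intro k
    obtain ⟨y, hy, hyu⟩ := domain_mvt S.hasD (convex_closedBall _ _)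
      (ball_subset_closedBall (hrB k)) (ball_subset_closedBall (hxB k))
    refine ⟨y, hy, ?_⟩
    rw [show x k - planeRefl e (l k) (x k) = (2 * (⟪e, x k⟫ - l k)) • e by
      rw [planeRefl]; module, map_smul, smul_eq_mul] at hyu
    have h1 := hxu k
    have h2 := hxl k
    have h3 : 0 < 2 * (⟪e, x k⟫ - l k) := by linarith
    exact (mul_pos_iff_of_pos_left h3).1 (by linarith)
  choose y hy hyD using hmvt
  have hyB : ∀ k, y k ∈ ball (0 : EuclideanSpace ℝ (Fin n)) R := fun k =>
    (convex_ball _ _).segment_subset (hrB k) (hxB k) (hy k)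
  have hylim : Tendsto (fun k => y (φ k)) atTop (𝓝 p) := by
    rw [planeRefl_eq_self heq.symm] at hrlim
    have h1 : Tendsto (fun k => y (φ k) - planeRefl e (l (φ k)) (x (φ k))) atTop (𝓝 0) := by
      have h2 : Tendsto (fun k => x (φ k) - planeRefl e (l (φ k)) (x (φ k))) atTop (𝓝 0) := by
        simpa using hφp.sub hrlim
      exact squeeze_zero_norm (fun k => norm_sub_le_of_mem_segment (hy (φ k)))
        (tendsto_norm_zero.comp h2)
    simpa using h1.add hrlim
  rcases hpn.lt_or_eq with hn | hn
  · have h1 := S.deriv_neg_of_cap he hl₀ (by linarith) hcap (by simpa using hn) heq.symm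
    have h2 : 0 ≤ D p e := ge_of_tendsto'
      ((S.contD_apply e p hp).tendsto.comp (tendsto_nhdsWithin_iff.2
        ⟨hylim, Eventually.of_forall fun k => ball_subset_closedBall (hyB (φ k))⟩))
      fun k => (hyD (φ k)).le
    linarith
  · exact S.no_increase_near_bdry he hn (by linarith) (fun k => hyB (φ k)) hylim
      fun k => hyD (φ k)

/-- Every plane position in `[0, R]` is admissible, by continuous induction from `l = R`, where the
cap is empty. -/
theorem capLe_all (S : PosSol R K u D H) {e : EuclideanSpace ℝ (Fin n)} (he : ‖e‖ = 1) {l : ℝ}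
    (hl : 0 ≤ l) (hlR : l ≤ R) : CapLe R u e l := by
  have hR := S.R_pos
  -- the plane moves inwards as `t = R - l` increases
  have hsub : Icc 0 R ⊆ {t : ℝ | CapLe R u e (R - t)} := by
    refine IsClosed.Icc_subset_of_forall_exists_gt ?_ ?_ ?_
    · refine IsSeqClosed.isClosed fun t t₀ ht hlim => ?_
      have ht₀ : t₀ ∈ Icc 0 R := isClosed_Icc.mem_of_tendsto hlim
        (Eventually.of_forall fun k => (ht k).2)
      refine ⟨fun x hx hlx => ?_, ht₀⟩
      have hlim' : Tendsto (fun k => R - t k) atTop (𝓝 (R - t₀)) := tendsto_const_nhds.sub hlim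
      have hm := planeRefl_mem_ball he hR (sub_nonneg.2 ht₀.2) hx hlx.le
      have hr : Tendsto (fun k => u (planeRefl e (R - t k) x)) atTop
          (𝓝 (u (planeRefl e (R - t₀) x))) :=
        (S.contDiff _ hm).continuousAt.tendsto.comp
          (((continuous_planeRefl e).tendsto (R - t₀, x)).comp
            (hlim'.prodMk_nhds tendsto_const_nhds))
      refine ge_of_tendsto hr ?_
      filter_upwards [hlim'.eventually (gt_mem_nhds hlx)] with k hk
      exact (ht k).1 x hx hk
    · intro x hx hlx
      have h1 : ⟪e, x⟫ ≤ ‖x‖ := by simpa [he] using real_inner_le_norm e x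
      have h2 : ‖x‖ < R := by simpa using hx
      linarith
    · rintro t ⟨ht, ht0, htR⟩ s hs
      by_contra hne
      rw [not_nonempty_iff_eq_empty] at hne
      set m := min s R
      have htm : t < m := lt_min hs htR
      have hseq : Tendsto (fun k : ℕ => R - (t + (m - t) * (1 / ((k : ℝ) + 1)))) atTop
          (𝓝 (R - (t + (m - t) * 0))) :=
        tendsto_const_nhds.sub (tendsto_const_nhds.add
          (tendsto_one_div_add_atTop_nhds_zero_nat.const_mul _))
      rw [mul_zero, add_zero] at hseq
      have hk : ∀ k : ℕ, 0 < 1 / ((k : ℝ) + 1) ∧ 1 / ((k : ℝ) + 1) ≤ 1 := fun k =>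
        ⟨by positivity, by rw [div_le_one (by positivity)]; linarith [k.cast_nonneg (α := ℝ)]⟩
      have hle : ∀ k : ℕ, t + (m - t) * (1 / ((k : ℝ) + 1)) ≤ m := fun k => by
        nlinarith [(hk k).2]
      refine S.cap_step he (sub_pos.2 htR) ht
        (fun k => ?_) hseq fun k hcap => ?_
      · have := min_le_right s R
        linarith [hle k]
      · have hmem : t + (m - t) * (1 / ((k : ℝ) + 1)) ∈
            {t : ℝ | CapLe R u e (R - t)} ∩ Ioc t s :=
          ⟨hcap, by nlinarith [mul_pos (sub_pos.2 htm) (hk k).1],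
            (hle k).trans (min_le_left s R)⟩
        rw [hne] at hmem
        exact hmem
  have := hsub (show R - l ∈ Icc 0 R from ⟨by linarith, by linarith⟩)
  simpa using this

theorem le_of_norm_eq (S : PosSol R K u D H) {x y : EuclideanSpace ℝ (Fin n)} (hx : ‖x‖ < R)
    (hxy : ‖x‖ = ‖y‖) : u x ≤ u y := by
  by_cases h : x = y
  · rw [h]
  have hd : 0 < ‖x - y‖ := norm_pos_iff.2 (sub_ne_zero.2 h)
  -- reflection in the hyperplane through the origin orthogonal to `x - y` swaps `x` and `y`
  set e : EuclideanSpace ℝ (Fin n) := ‖x - y‖⁻¹ • (x - y) with hedef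
  have he : ‖e‖ = 1 := by
    rw [hedef, norm_smul, norm_inv, norm_norm, inv_mul_cancel₀ hd.ne']
  have hin : ⟪x - y, x⟫ = ‖x - y‖ ^ 2 / 2 := by
    rw [norm_sub_sq_real, inner_sub_left, real_inner_self_eq_norm_sq, hxy, real_inner_comm]
    ring
  have hex : ⟪e, x⟫ = ‖x - y‖ / 2 := by
    rw [hedef, inner_smul_left, hin]
    simp only [conj_trivial]
    field_simp
  have hr : planeRefl e 0 x = y := by
    rw [planeRefl, hex, hedef, smul_smul]
    rw [show 2 * (0 - ‖x - y‖ / 2) * ‖x - y‖⁻¹ = -1 by field_simp; ring]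
    module
  have := S.capLe_all he le_rfl S.R_pos.le x (by simpa using hx) (by rw [hex]; positivity)
  rwa [hr] at this

theorem radial (S : PosSol R K u D H) {x y : EuclideanSpace ℝ (Fin n)} (hx : ‖x‖ ≤ R)
    (hxy : ‖x‖ = ‖y‖) : u x = u y := by
  rcases hx.lt_or_eq with h | h
  · exact le_antisymm (S.le_of_norm_eq h hxy) (S.le_of_norm_eq (hxy ▸ h) hxy.symm)
  · rw [S.bdry x h, S.bdry y (hxy ▸ h)]

theorem radial_deriv_neg (S : PosSol R K u D H) {x : EuclideanSpace ℝ (Fin n)} (hx : ‖x‖ < R)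
    (hx0 : x ≠ 0) : fderiv ℝ u x (‖x‖⁻¹ • x) < 0 := by
  have hn : 0 < ‖x‖ := norm_pos_iff.2 hx0
  have he : ‖‖x‖⁻¹ • x‖ = 1 := by
    rw [norm_smul, norm_inv, norm_norm, inv_mul_cancel₀ hn.ne']
  have hxB : x ∈ ball (0 : EuclideanSpace ℝ (Fin n)) R := by simpa using hx
  rw [(S.hasFDerivAt hxB).fderiv]
  refine S.deriv_neg_of_cap he hn hx (S.capLe_all he hn.le hx.le) hxB ?_
  rw [inner_smul_left, real_inner_self_eq_norm_sq]
  simp only [conj_trivial]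
  field_simp

end PosSol

/-! ### From the boundary value problem to `PosSol` -/

/-- A positive `C²` solution on the ball centred at the origin is a `PosSol`. The one-sided bound on
the Laplacian comes from the Lipschitz constant of `f₁` on the compact range of `u`; the
contribution of `f₂` has a favourable sign. -/
theorem exists_posSol {n : ℕ} {R : ℝ} (hR : 0 < R) {f₁ f₂ : ℝ → ℝ} (hf₁ : LocallyLipschitz f₁)
    (hf₂ : Monotone f₂) {u : EuclideanSpace ℝ (Fin n) → ℝ}
    (hu : ContDiffOn ℝ 2 u (closedBall 0 R)) (hupos : ∀ x ∈ ball 0 R, 0 < u x)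
    (heq : ∀ x ∈ ball 0 R, lap u x = -(f₁ (u x) + f₂ (u x)))
    (hdir : ∀ x, ‖x‖ = R → u x = 0) : ∃ K D H, PosSol R K u D H := by
  have hinter : interior (closedBall (0 : EuclideanSpace ℝ (Fin n)) R) = ball 0 R :=
    interior_closedBall _ hR.ne'
  have hs : UniqueDiffOn ℝ (closedBall (0 : EuclideanSpace ℝ (Fin n)) R) :=
    uniqueDiffOn_convex (convex_closedBall _ _) (by rw [hinter]; exact nonempty_ball.2 hR)
  have hD : ContDiffOn ℝ 1 (fderivWithin ℝ u (closedBall 0 R)) (closedBall 0 R) :=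
    hu.fderivWithin hs (by norm_num)
  have hnhds : ∀ x ∈ ball (0 : EuclideanSpace ℝ (Fin n)) R, closedBall 0 R ∈ 𝓝 x := fun x hx =>
    mem_of_superset (isOpen_ball.mem_nhds hx) ball_subset_closedBall
  obtain ⟨K, hK⟩ := LocallyLipschitzOn.exists_lipschitzOnWith_of_compact
    ((isCompact_closedBall (0 : EuclideanSpace ℝ (Fin n)) R).image_of_continuousOn hu.continuousOn)
    (hf₁.locallyLipschitzOn)
  refine ⟨K, fderivWithin ℝ u (closedBall 0 R),
    fderivWithin ℝ (fderivWithin ℝ u (closedBall 0 R)) (closedBall 0 R),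
    { R_pos := hR
      K_nonneg := K.2
      hasD := fun x hx => (hu.differentiableOn (by norm_num) x hx).hasFDerivWithinAt
      hasH := fun x hx => (hD.differentiableOn (by norm_num) x hx).hasFDerivWithinAt
      contH := hD.continuousOn_fderivWithin hs (by norm_num)
      symm := fun x hx v w => ?_
      contDiff := fun x hx => hu.contDiffAt (hnhds x hx)
      lap_eq := fun x hx => ?_
      pos := hupos
      bdry := hdir
      lap_le := fun x hx y hy hyx => ?_ }⟩
  · exact (hu x hx).isSymmSndFDerivWithinAt (by simp) hs
      (by rwa [hinter, closure_ball _ hR.ne']) hx v w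
  · have h : fderivWithin ℝ u (closedBall 0 R) =ᶠ[𝓝 x] fderiv ℝ u := by
      filter_upwards [isOpen_ball.mem_nhds hx] with y hy
      exact fderivWithin_of_mem_nhds (hnhds y hy)
    rw [lap_eq_sum_fderiv, fderivWithin_of_mem_nhds (hnhds x hx), h.fderiv_eq]
  · rw [heq x hx, heq y hy]
    have h1 := hK.dist_le_mul _ (mem_image_of_mem u (ball_subset_closedBall hx)) _
      (mem_image_of_mem u (ball_subset_closedBall hy))
    rw [Real.dist_eq, Real.dist_eq, abs_of_nonneg (sub_nonneg.2 hyx)] at h1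
    linarith [(abs_le.1 h1).1, hf₂ hyx]

/-- **Gidas–Ni–Nirenberg radial symmetry theorem.** Any positive solution `u ∈ C²(cl B)` of
`-Δu = f(u)` in an open ball `B = B_R(x₀)`, `u = 0` on `∂B`, with `f = f₁ + f₂`, `f₁` locally
Lipschitz and `f₂` non-decreasing, is radially symmetric about `x₀` and its radial derivative
is strictly negative for `0 < r < R`. -/
theorem gidas_ni_nirenberg_radial_symmetry {n : ℕ}
    (x₀ : EuclideanSpace ℝ (Fin n)) (R : ℝ) (hR : 0 < R)
    (f f₁ f₂ : ℝ → ℝ) (hf : f = f₁ + f₂) (hf₁ : LocallyLipschitz f₁) (hf₂ : Monotone f₂)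
    (u : EuclideanSpace ℝ (Fin n) → ℝ)
    (hu : ContDiffOn ℝ 2 u (closure (Metric.ball x₀ R)))
    (hupos : ∀ x ∈ Metric.ball x₀ R, 0 < u x)
    (heq : ∀ x ∈ Metric.ball x₀ R, lap u x = -(f (u x)))
    (hdir : ∀ x ∈ frontier (Metric.ball x₀ R), u x = 0) :
    (∃ U : ℝ → ℝ, ∀ x ∈ closure (Metric.ball x₀ R), u x = U ‖x - x₀‖) ∧
    ∀ x ∈ Metric.ball x₀ R, x ≠ x₀ →
      fderiv ℝ u x (‖x - x₀‖⁻¹ • (x - x₀)) < 0 := by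
  rw [closure_ball x₀ hR.ne'] at hu ⊢
  rw [frontier_ball x₀ hR.ne'] at hdir
  have hcl : ∀ y ∈ closedBall (0 : EuclideanSpace ℝ (Fin n)) R, y + x₀ ∈ closedBall x₀ R :=
    fun y hy => by simpa [mem_closedBall, dist_eq_norm] using hy
  have hop : ∀ y ∈ ball (0 : EuclideanSpace ℝ (Fin n)) R, y + x₀ ∈ ball x₀ R :=
    fun y hy => by simpa [mem_ball, dist_eq_norm] using hy
  obtain ⟨K, D, H, S⟩ := exists_posSol (u := fun y => u (y + x₀)) hR hf₁ hf₂
    (hu.comp (contDiff_id.add contDiff_const).contDiffOn hcl)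
    (fun y hy => hupos _ (hop y hy))
    (fun y hy => by rw [lap_comp_add, heq _ (hop y hy), hf]; rfl)
    (fun y hy => hdir _ (by simpa [mem_sphere, dist_eq_norm] using hy))
  refine ⟨⟨fun r => open Classical in
    if h : ∃ y : EuclideanSpace ℝ (Fin n), ‖y‖ = r then u (h.choose + x₀) else 0, ?_⟩, ?_⟩
  · intro x hx
    have h : ∃ y : EuclideanSpace ℝ (Fin n), ‖y‖ = ‖x - x₀‖ := ⟨_, rfl⟩
    rw [mem_closedBall, dist_eq_norm] at hx
    simpa only [dif_pos h, sub_add_cancel] using S.radial hx h.choose_spec.symm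
  · intro x hx hne
    rw [mem_ball, dist_eq_norm] at hx
    simpa only [fderiv_comp_add_right, sub_add_cancel]
      using S.radial_deriv_neg hx (sub_ne_zero.2 hne)
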